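/- An element (λ, s) with λ = (λ₁ ≥ λ₂ ≥ λ₃ ≥ λ₄) ∈ ℝ⁴ and s = (s₁ ≥ s₂ ≥ 0) ∈ ℝ² belongs to A(2,2) if and only if the following four inequalities hold: λ₁ − λ₄ ≥ 2s₁, λ₂ − λ₄ ≥ 2s₂, λ₁ − λ₃ ≥ 2s₂, and λ₁ + λ₂ − λ₃ − λ₄ ≥ 2(s₁ + s₂). -/

import Mathlib

open Matrix

/-- Eigenvalues of a (Hermitian) complex matrix, listed in decreasing order. -/
noncomputable def eigVec {k : ℕ} (X : Matrix (Fin k) (Fin k) ℂ) (hX : X.IsHermitian) :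
    Fin k → ℝ :=
  fun i => hX.eigenvalues (Tuple.sort hX.eigenvalues i.rev)

/-- The `i`-th (0-based) singular value of a rectangular complex matrix:
the square root of the `i`-th largest eigenvalue of `Y * Yᴴ` (and `0` for `i ≥ a`). -/
noncomputable def sval {a b : ℕ} (Y : Matrix (Fin a) (Fin b) ℂ) (i : ℕ) : ℝ :=
  if h : i < a then
    Real.sqrt (eigVec (Y * Yᴴ) (Matrix.isHermitian_mul_conjTranspose_self Y) ⟨i, h⟩)
  else 0

/-- The Horn cone `Horn(k)`. -/
def Horn (k : ℕ) : Set ((Fin k → ℝ) × (Fin k → ℝ) × (Fin k → ℝ)) :=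
  { v | ∃ (X Y : Matrix (Fin k) (Fin k) ℂ) (hX : X.IsHermitian) (hY : Y.IsHermitian),
      v.1 = eigVec X hX ∧ v.2.1 = eigVec Y hY ∧ v.2.2 = eigVec (X + Y) (hX.add hY) }

/-- The Littlewood–Richardson cone `LR(m,n)`. -/
def LRcone (m n : ℕ) : Set ((Fin (m + n) → ℝ) × (Fin m → ℝ) × (Fin n → ℝ)) :=
  { v | ∃ (M : Matrix (Fin (m + n)) (Fin (m + n)) ℂ) (hM : M.IsHermitian),
      v.1 = eigVec M hM ∧
      v.2.1 = eigVec (M.submatrix (Fin.castAdd n) (Fin.castAdd n))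
        (hM.submatrix (Fin.castAdd n)) ∧
      v.2.2 = eigVec (M.submatrix (Fin.natAdd m) (Fin.natAdd m))
        (hM.submatrix (Fin.natAdd m)) }

/-- Top-left `p × p` block. -/
def blockTL (p q : ℕ) (X : Matrix (Fin (p + q)) (Fin (p + q)) ℂ) : Matrix (Fin p) (Fin p) ℂ :=
  X.submatrix (Fin.castAdd q) (Fin.castAdd q)

/-- Top-right `p × q` block. -/
def blockTR (p q : ℕ) (X : Matrix (Fin (p + q)) (Fin (p + q)) ℂ) : Matrix (Fin p) (Fin q) ℂ :=
  X.submatrix (Fin.castAdd q) (Fin.natAdd p)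

/-- Bottom-left `q × p` block. -/
def blockBL (p q : ℕ) (X : Matrix (Fin (p + q)) (Fin (p + q)) ℂ) : Matrix (Fin q) (Fin p) ℂ :=
  X.submatrix (Fin.natAdd p) (Fin.castAdd q)

/-- Bottom-right `q × q` block. -/
def blockBR (p q : ℕ) (X : Matrix (Fin (p + q)) (Fin (p + q)) ℂ) : Matrix (Fin q) (Fin q) ℂ :=
  X.submatrix (Fin.natAdd p) (Fin.natAdd p)

/-- `λ* = (−λ_k, …, −λ_1)`. -/
def starVec {k : ℕ} (x : Fin k → ℝ) : Fin k → ℝ := fun i => -x i.rev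

/-- `ŝ^{p,q} = (s₁, …, s_q, 0, …, 0, −s_q, …, −s₁) ∈ ℝ^{p+q}` (with `p − q` middle zeros). -/
noncomputable def hatPQ (p q : ℕ) (s : Fin q → ℝ) : Fin (p + q) → ℝ :=
  fun i =>
    if h : (i : ℕ) < q then s ⟨i, h⟩
    else if h' : (i : ℕ) < p then 0
    else -s ⟨p + q - 1 - i, by have := i.isLt; omega⟩

/-- The cone `A(p,q)`: pairs `(e(X), s(X₁₂))` for `X` Hermitian of size `p+q`. -/
def coneA (p q : ℕ) : Set ((Fin (p + q) → ℝ) × (Fin q → ℝ)) :=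
  { v | ∃ (X : Matrix (Fin (p + q)) (Fin (p + q)) ℂ) (hX : X.IsHermitian),
      v.1 = eigVec X hX ∧ ∀ i : Fin q, v.2 i = sval (blockTR p q X) (i : ℕ) }

/-- The cone `S(p,q)`: triples `(s(X), s(X₁₂), s(X₂₁))`. -/
def coneS (p q : ℕ) : Set ((Fin (p + q) → ℝ) × (Fin q → ℝ) × (Fin q → ℝ)) :=
  { v | ∃ X : Matrix (Fin (p + q)) (Fin (p + q)) ℂ,
      (∀ i : Fin (p + q), v.1 i = sval X (i : ℕ)) ∧
      (∀ i : Fin q, v.2.1 i = sval (blockTR p q X) (i : ℕ)) ∧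
      (∀ i : Fin q, v.2.2 i = sval (blockBL p q X) (i : ℕ)) }

/-- The cone `T(p,q)`: triples `(s(X), s(X₁₁), s(X₂₂))`. -/
def coneT (p q : ℕ) : Set ((Fin (p + q) → ℝ) × (Fin p → ℝ) × (Fin q → ℝ)) :=
  { v | ∃ X : Matrix (Fin (p + q)) (Fin (p + q)) ℂ,
      (∀ i : Fin (p + q), v.1 i = sval X (i : ℕ)) ∧
      (∀ i : Fin p, v.2.1 i = sval (blockTL p q X) (i : ℕ)) ∧
      (∀ i : Fin q, v.2.2 i = sval (blockBR p q X) (i : ℕ)) }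

/-- `μ(A) = (a_r − r ≥ … ≥ a₂ − 2 ≥ a₁ − 1)` as a decreasing real vector, for
`A = {a₁ < … < a_r}` a subset of `[n]` (0-based indexing internally). -/
noncomputable def muVec {n r : ℕ} (A : Finset (Fin n)) (h : A.card = r) : Fin r → ℝ :=
  fun k => (((A.orderIsoOfFin h k.rev : Fin n) : ℕ) : ℝ) - ((k.rev : ℕ) : ℝ)

/-- `A^o = {ℓ + 1 − a : a ∈ A}` inside `[ℓ]`. -/
def opp {n : ℕ} (A : Finset (Fin n)) : Finset (Fin n) := A.image Fin.rev

/-- `|s|_{K ∩ [q]}` where `K ⊆ [n]`, `s ∈ ℝ^q` and `[q]` is viewed inside `[n]`. -/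
noncomputable def sumRestr {n q : ℕ} (s : Fin q → ℝ) (K : Finset (Fin n)) : ℝ :=
  ∑ i ∈ K, (if h : (i : ℕ) < q then s ⟨i, h⟩ else 0)

/-- The augmented matrix `Ŷ^{p,q} = [[0, Y], [Yᴴ, 0]]` of size `p + q`. -/
def hatM (p q : ℕ) (Y : Matrix (Fin p) (Fin q) ℂ) : Matrix (Fin (p + q)) (Fin (p + q)) ℂ :=
  Matrix.reindex finSumFinEquiv finSumFinEquiv (Matrix.fromBlocks 0 Y Yᴴ 0)

lemma eigVec_antitone {k : ℕ} (X : Matrix (Fin k) (Fin k) ℂ) (hX : X.IsHermitian) :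
    Antitone (eigVec X hX) := fun _ _ hij =>
  Tuple.monotone_sort hX.eigenvalues (Fin.rev_le_rev.mpr hij)

lemma eigVec_eq_of_det {k : ℕ} {X : Matrix (Fin k) (Fin k) ℂ} (hX : X.IsHermitian)
    {l : Fin k → ℝ} (hl : Antitone l)
    (hdet : ∀ t : ℂ, (scalar (Fin k) t - X).det = ∏ i, (t - (l i : ℂ))) :
    eigVec X hX = l := by
  have hchar : X.charpoly = ∏ i, (Polynomial.X - Polynomial.C (l i : ℂ)) := by
    refine Polynomial.funext fun t => ?_
    rw [eval_charpoly, hdet, Polynomial.eval_prod]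
    simp
  have hroots : Multiset.map (fun i => ((hX.eigenvalues i : ℝ) : ℂ)) Finset.univ.val =
      Multiset.map (fun i => (l i : ℂ)) Finset.univ.val := by
    have h := hX.roots_charpoly_eq_eigenvalues
    rw [hchar, Polynomial.roots_prod _ _
      (Finset.prod_ne_zero_iff.mpr fun i _ => Polynomial.X_sub_C_ne_zero _)] at h
    simpa [Multiset.bind_singleton] using h.symm
  have hreal : Multiset.map hX.eigenvalues Finset.univ.val =
      Multiset.map l Finset.univ.val := by
    refine Multiset.map_injective Complex.ofReal_injective ?_
    rw [Multiset.map_map, Multiset.map_map]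
    exact hroots
  have hperm : Multiset.map (eigVec X hX) Finset.univ.val =
      Multiset.map l Finset.univ.val := by
    rw [← hreal]
    have := Multiset.map_univ_val_equiv (Fin.revPerm.trans (Tuple.sort hX.eigenvalues))
    conv_rhs => rw [← this]
    rw [Multiset.map_map]
    rfl
  rw [← List.ofFn_inj]
  refine List.Perm.eq_of_pairwise' (r := (· ≥ ·)) ?_ ?_ ?_
  · exact List.pairwise_ofFn.mpr fun _ _ h => eigVec_antitone X hX h.le
  · exact List.pairwise_ofFn.mpr fun _ _ h => hl h.le
  · rw [Fin.univ_val_map, Fin.univ_val_map] at hperm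
    exact Multiset.coe_eq_coe.mp hperm

/-- The Hermitian matrix with real entries
`x, z, a, 0; z, y, 0, b; a, 0, x', z; 0, b, z, y'`. -/
def crossMatrix (x y x' y' z a b : ℝ) : Matrix (Fin (2 + 2)) (Fin (2 + 2)) ℂ :=
  !![(x : ℂ), z, a, 0; z, y, 0, b; a, 0, x', z; 0, b, z, y']

lemma crossMatrix_isHermitian (x y x' y' z a b : ℝ) :
    (crossMatrix x y x' y' z a b).IsHermitian := by
  ext i j
  fin_cases i <;> fin_cases j <;> simp [crossMatrix]

lemma sval_blockTR_crossMatrix (x y x' y' z : ℝ) {s : Fin 2 → ℝ} (hs : Antitone s)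
    (hs0 : ∀ i, 0 ≤ s i) (i : Fin 2) :
    sval (blockTR 2 2 (crossMatrix x y x' y' z (s 0) (s 1))) i = s i := by
  have hblock : blockTR 2 2 (crossMatrix x y x' y' z (s 0) (s 1)) =
      !![(s 0 : ℂ), 0; 0, s 1] := by
    ext i j
    fin_cases i <;> fin_cases j <;> rfl
  have heig : eigVec (blockTR 2 2 (crossMatrix x y x' y' z (s 0) (s 1)) *
      (blockTR 2 2 (crossMatrix x y x' y' z (s 0) (s 1)))ᴴ)
      (Matrix.isHermitian_mul_conjTranspose_self _) = fun i => s i ^ 2 := by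
    refine eigVec_eq_of_det _ (fun i j h => pow_le_pow_left₀ (hs0 j) (hs h) 2) fun t => ?_
    rw [hblock]
    have hH : (!![(s 0 : ℂ), 0; 0, s 1])ᴴ = !![(s 0 : ℂ), 0; 0, s 1] := by
      ext i j
      fin_cases i <;> fin_cases j <;> simp
    rw [hH]
    simp [det_fin_two]
    ring
  rw [sval, dif_pos i.isLt, heig]
  exact Real.sqrt_sq (hs0 i)

lemma mem_coneA_of_crossMatrix {lam : Fin (2 + 2) → ℝ} {s : Fin 2 → ℝ} (hlam : Antitone lam)
    (hs : Antitone s) (hs0 : ∀ i, 0 ≤ s i) (x y x' y' z : ℝ)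
    (hdet : ∀ t : ℂ, (scalar (Fin (2 + 2)) t - crossMatrix x y x' y' z (s 0) (s 1)).det =
      (t - lam 0) * (t - lam 1) * (t - lam 2) * (t - lam 3)) :
    (lam, s) ∈ coneA 2 2 := by
  refine ⟨_, crossMatrix_isHermitian x y x' y' z (s 0) (s 1), ?_, fun i =>
    (sval_blockTR_crossMatrix x y x' y' z hs hs0 i).symm⟩
  refine (eigVec_eq_of_det _ hlam fun t => ?_).symm
  rw [hdet]
  simp [Fin.prod_univ_four]

lemma det_scalar_sub_crossMatrix (x y x' y' z a b : ℝ) (t : ℂ) :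
    (scalar (Fin (2 + 2)) t - crossMatrix x y x' y' z a b).det =
      ((t - x) * (t - x') - a ^ 2) * ((t - y) * (t - y') - b ^ 2) -
      z ^ 2 * ((t - x) * (t - y) + (t - x') * (t - y') + 2 * a * b) + z ^ 4 := by
  rw [crossMatrix]
  simp [det_succ_row_zero, Fin.sum_univ_succ, Fin.succAbove]
  ring

/-- A real symmetric `2 × 2` matrix with eigenvalues `p, q` may have any off-diagonal entry `a`
with `2 * a ≤ p - q`. -/
lemma exists_diag_of_two_mul_le {p q a : ℝ} (ha : 0 ≤ a) (h : 2 * a ≤ p - q) :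
    ∃ x x' : ℝ, x + x' = p + q ∧ x * x' - a ^ 2 = p * q := by
  have hnn : 0 ≤ (p - q) ^ 2 - (2 * a) ^ 2 := by nlinarith
  refine ⟨((p + q) + √((p - q) ^ 2 - (2 * a) ^ 2)) / 2,
    ((p + q) - √((p - q) ^ 2 - (2 * a) ^ 2)) / 2, by ring, ?_⟩
  linear_combination (-1 / 4) * Real.sq_sqrt hnn

/-- Two `2 × 2` blocks with eigenvalues `p, q` and `r, t`. -/
lemma mem_coneA_of_pairing {lam : Fin (2 + 2) → ℝ} {s : Fin 2 → ℝ} (hlam : Antitone lam)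
    (hs : Antitone s) (hs0 : ∀ i, 0 ≤ s i) {p q r u : ℝ}
    (h0 : 2 * s 0 ≤ p - q) (h1 : 2 * s 1 ≤ r - u)
    (hprod : ∀ t : ℂ, (t - p) * (t - q) * ((t - r) * (t - u)) =
      (t - lam 0) * (t - lam 1) * (t - lam 2) * (t - lam 3)) :
    (lam, s) ∈ coneA 2 2 := by
  obtain ⟨x, x', hx, hx'⟩ := exists_diag_of_two_mul_le (hs0 0) h0
  obtain ⟨y, y', hy, hy'⟩ := exists_diag_of_two_mul_le (hs0 1) h1
  refine mem_coneA_of_crossMatrix hlam hs hs0 x y x' y' 0 fun t => ?_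
  rw [det_scalar_sub_crossMatrix, ← hprod]
  have e1 : (t - x) * (t - x') - (s 0 : ℂ) ^ 2 = (t - p) * (t - q) := by
    have hx : (x : ℂ) + x' = p + q := mod_cast hx
    have hx' : (x : ℂ) * x' - s 0 ^ 2 = p * q := mod_cast hx'
    linear_combination (-t) * hx + hx'
  have e2 : (t - y) * (t - y') - (s 1 : ℂ) ^ 2 = (t - r) * (t - u) := by
    have hy : (y : ℂ) + y' = r + u := mod_cast hy
    have hy' : (y : ℂ) * y' - s 1 ^ 2 = r * u := mod_cast hy'
    linear_combination (-t) * hy + hy'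
  rw [e1, e2]
  simp

/-- Realization by `M ⊗ 1 + Σ ⊗ R`, where `Σ = diag(σ₁, σ₂)` and `R` is a reflection
with off-diagonal entry `τ`. -/
lemma mem_coneA_of_rotation {lam : Fin (2 + 2) → ℝ} {s : Fin 2 → ℝ} (hlam : Antitone lam)
    (hs : Antitone s) (hs0 : ∀ i, 0 ≤ s i) {m₁ m₂ z σ₁ σ₂ k τ : ℝ} (hkτ : k ^ 2 + τ ^ 2 = 1)
    (h0 : s 0 = τ * σ₁) (h1 : s 1 = τ * σ₂)
    (htr : m₁ + σ₁ + (m₂ + σ₂) = lam 0 + lam 1)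
    (hdet : (m₁ + σ₁) * (m₂ + σ₂) - z ^ 2 = lam 0 * lam 1)
    (htr' : m₁ - σ₁ + (m₂ - σ₂) = lam 2 + lam 3)
    (hdet' : (m₁ - σ₁) * (m₂ - σ₂) - z ^ 2 = lam 2 * lam 3) :
    (lam, s) ∈ coneA 2 2 := by
  refine mem_coneA_of_crossMatrix hlam hs hs0 (m₁ + k * σ₁) (m₂ + k * σ₂)
    (m₁ - k * σ₁) (m₂ - k * σ₂) z fun t => ?_
  rw [det_scalar_sub_crossMatrix, h0, h1]
  have e1 : (t - (m₁ + σ₁)) * (t - (m₂ + σ₂)) - (z : ℂ) ^ 2 = (t - lam 0) * (t - lam 1) := by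
    have htr : (m₁ : ℂ) + σ₁ + (m₂ + σ₂) = lam 0 + lam 1 := mod_cast htr
    have hdet : ((m₁ : ℂ) + σ₁) * (m₂ + σ₂) - z ^ 2 = lam 0 * lam 1 := mod_cast hdet
    linear_combination (-t) * htr + hdet
  have e2 : (t - (m₁ - σ₁)) * (t - (m₂ - σ₂)) - (z : ℂ) ^ 2 = (t - lam 2) * (t - lam 3) := by
    have htr : (m₁ : ℂ) - σ₁ + (m₂ - σ₂) = lam 2 + lam 3 := mod_cast htr'
    have hdet : ((m₁ : ℂ) - σ₁) * (m₂ - σ₂) - z ^ 2 = lam 2 * lam 3 := mod_cast hdet'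
    linear_combination (-t) * htr + hdet
  have hk : (k : ℂ) ^ 2 = 1 - τ ^ 2 := by
    have hkτ : (k : ℂ) ^ 2 + τ ^ 2 = 1 := mod_cast hkτ
    linear_combination hkτ
  have hk4 : (k : ℂ) ^ 4 = (1 - τ ^ 2) ^ 2 := by rw [← hk]; ring
  rw [mul_assoc (_ * _), ← e1, ← e2]
  push_cast
  ring_nf
  rw [hk4, hk]
  ring

lemma mem_coneA_of_inequalities {lam : Fin (2 + 2) → ℝ} {s : Fin 2 → ℝ}
    (h1 : lam 0 ≥ lam 1) (h2 : lam 1 ≥ lam 2) (h3 : lam 2 ≥ lam 3)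
    (hs1 : s 0 ≥ s 1) (hs2 : s 1 ≥ 0)
    (hA : lam 0 - lam 3 ≥ 2 * s 0) (hB : lam 1 - lam 3 ≥ 2 * s 1)
    (hC : lam 0 - lam 2 ≥ 2 * s 1)
    (hD : lam 0 + lam 1 - lam 2 - lam 3 ≥ 2 * (s 0 + s 1)) :
    (lam, s) ∈ coneA 2 2 := by
  have hlam : Antitone lam := by
    refine Fin.antitone_iff_succ_le.mpr fun i => ?_
    fin_cases i
    exacts [h1, h2, h3]
  have hs : Antitone s := by
    refine Fin.antitone_iff_succ_le.mpr fun i => ?_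
    fin_cases i
    exact hs1
  have hs0 : ∀ i, 0 ≤ s i := by
    intro i
    fin_cases i
    exacts [hs2.trans hs1, hs2]
  by_cases c1 : 2 * s 1 ≤ lam 1 - lam 2
  · exact mem_coneA_of_pairing hlam hs hs0 hA c1 fun t => by ring
  by_cases c2 : 2 * s 0 ≤ lam 0 - lam 2
  · exact mem_coneA_of_pairing hlam hs hs0 c2 hB fun t => by ring
  by_cases c3 : 2 * s 0 ≤ lam 1 - lam 3
  · exact mem_coneA_of_pairing hlam hs hs0 c3 hC fun t => by ring
  push Not at c1 c2 c3
  set S := (lam 0 + lam 1 - lam 2 - lam 3) / 2 with hS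
  have hspos : 0 < s 0 + s 1 := by linarith
  have hSpos : 0 < S := by linarith
  have hτpos : 0 < (s 0 + s 1) / S := by positivity
  have hτle : (s 0 + s 1) / S ≤ 1 := (div_le_one hSpos).mpr (by linarith)
  obtain ⟨σ, hσ⟩ : ∃ σ, σ = s 0 * S / (s 0 + s 1) := ⟨_, rfl⟩
  have hσs : σ * (s 0 + s 1) = s 0 * S := by rw [hσ]; field_simp
  have b1 : σ ≤ (lam 0 - lam 3) / 2 := by
    refine le_of_mul_le_mul_right ?_ hspos
    rw [hσs]; nlinarith
  have b2 : (lam 0 - lam 2) / 2 ≤ σ := by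
    refine le_of_mul_le_mul_right ?_ hspos
    rw [hσs]; nlinarith
  have b3 : (lam 1 - lam 3) / 2 ≤ σ := by
    refine le_of_mul_le_mul_right ?_ hspos
    rw [hσs]; nlinarith
  have hgap : 0 < 2 * σ - S := by
    refine pos_of_mul_pos_left (b := s 0 + s 1) ?_ hspos.le
    have : (2 * σ - S) * (s 0 + s 1) = S * (s 0 - s 1) := by linear_combination 2 * hσs
    rw [this]
    exact mul_pos hSpos (by linarith)
  set T := (lam 0 + lam 1 + lam 2 + lam 3) / 2 with hT
  set K := (lam 0 * lam 1 - lam 2 * lam 3) / 2 with hK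
  obtain ⟨m, hm⟩ : ∃ m, m = (T * σ - K) / (2 * σ - S) := ⟨_, rfl⟩
  have hm' : m * (2 * σ - S) = T * σ - K := by rw [hm, div_mul_cancel₀ _ hgap.ne']
  have g1 : 0 ≤ lam 0 - (m + σ) := by
    refine nonneg_of_mul_nonneg_left (b := 2 * σ - S) ?_ hgap
    have : (lam 0 - (m + σ)) * (2 * σ - S) =
        2 * ((lam 0 - lam 3) / 2 - σ) * (σ - (lam 0 - lam 2) / 2) := by
      rw [sub_mul, add_mul, hm', hT, hK, hS]; ring
    rw [this]
    exact mul_nonneg (by linarith) (by linarith)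
  have g2 : 0 ≤ (m + σ) - lam 1 := by
    refine nonneg_of_mul_nonneg_left (b := 2 * σ - S) ?_ hgap
    have : ((m + σ) - lam 1) * (2 * σ - S) =
        2 * (σ - (lam 1 - lam 3) / 2) * (σ - (lam 1 - lam 2) / 2) := by
      rw [sub_mul, add_mul, hm', hT, hK, hS]; ring
    rw [this]
    exact mul_nonneg (by linarith) (by linarith)
  have hz := Real.sq_sqrt (mul_nonneg g1 g2)
  have hk : 0 ≤ 1 - ((s 0 + s 1) / S) ^ 2 := by nlinarith
  refine mem_coneA_of_rotation hlam hs hs0 (m₁ := m) (m₂ := T - m)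
    (z := √((lam 0 - (m + σ)) * ((m + σ) - lam 1))) (σ₁ := σ) (σ₂ := S - σ)
    (k := √(1 - ((s 0 + s 1) / S) ^ 2)) (τ := (s 0 + s 1) / S) ?_ ?_ ?_ ?_ ?_ ?_ ?_
  · rw [Real.sq_sqrt hk]; ring
  · rw [hσ]; field_simp
  · rw [hσ]; field_simp; ring
  · rw [hT, hS]; ring
  · rw [hz, hT, hS]; ring
  · rw [hT, hS]; ring
  · rw [hz]
    have : (m - σ) * (T - m - (S - σ)) - (lam 0 - (m + σ)) * (m + σ - lam 1) =
      lam 0 * lam 1 - 2 * K := by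
      rw [hT, hS] at hm' ⊢
      linear_combination 2 * hm'
    rw [this, hK]; ring

section Spectral

variable {E : Type*} [NormedAddCommGroup E] [InnerProductSpace ℂ E]

/-- The quadratic form of the operator with eigenvalues `l` in the orthonormal basis `b`. -/
noncomputable def spectralForm {ι : Type*} [Fintype ι] (b : OrthonormalBasis ι ℂ E) (l : ι → ℝ)
    (x : E) : ℝ :=
  ∑ i, l i * ‖inner ℂ (b i) x‖ ^ 2

lemma spectralForm_le {ι : Type*} [Fintype ι] (b : OrthonormalBasis ι ℂ E) {l : ι → ℝ}
    {x : E} {M : ℝ} (h : ∀ i, inner ℂ (b i) x ≠ 0 → l i ≤ M) :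
    spectralForm b l x ≤ M * ‖x‖ ^ 2 := by
  rw [spectralForm, ← b.sum_sq_norm_inner_right, Finset.mul_sum]
  refine Finset.sum_le_sum fun i _ => ?_
  by_cases hi : inner ℂ (b i) x = 0
  · simp [hi]
  · exact mul_le_mul_of_nonneg_right (h i hi) (sq_nonneg _)

lemma le_spectralForm {ι : Type*} [Fintype ι] (b : OrthonormalBasis ι ℂ E) {l : ι → ℝ}
    {x : E} {M : ℝ} (h : ∀ i, inner ℂ (b i) x ≠ 0 → M ≤ l i) :
    M * ‖x‖ ^ 2 ≤ spectralForm b l x := by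
  rw [spectralForm, ← b.sum_sq_norm_inner_right, Finset.mul_sum]
  refine Finset.sum_le_sum fun i _ => ?_
  by_cases hi : inner ℂ (b i) x = 0
  · simp [hi]
  · exact mul_le_mul_of_nonneg_right (h i hi) (sq_nonneg _)

lemma sum_sq_norm_inner_le_one {ι : Type*} [Fintype ι] (b : OrthonormalBasis ι ℂ E)
    {w : Fin 2 → E} (hw : Orthonormal ℂ w) (i : ι) :
    ‖inner ℂ (b i) (w 0)‖ ^ 2 + ‖inner ℂ (b i) (w 1)‖ ^ 2 ≤ 1 := by
  have h := hw.sum_inner_products_le (b i) (s := Finset.univ)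
  rw [Fin.sum_univ_two, norm_inner_symm, norm_inner_symm (w 1), b.orthonormal.1 i] at h
  simpa using h

/-- Ky Fan's upper bound for two of four eigenvalues. -/
lemma spectralForm_add_le (b : OrthonormalBasis (Fin 4) ℂ E) {l : Fin 4 → ℝ} (hl : Antitone l)
    {w : Fin 2 → E} (hw : Orthonormal ℂ w) :
    spectralForm b l (w 0) + spectralForm b l (w 1) ≤ l 0 + l 1 := by
  have hn0 := b.sum_sq_norm_inner_right (w 0)
  have hn1 := b.sum_sq_norm_inner_right (w 1)
  rw [hw.1 0, Fin.sum_univ_four] at hn0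
  rw [hw.1 1, Fin.sum_univ_four] at hn1
  have hnonneg (i : Fin 4) := add_nonneg (sq_nonneg ‖inner ℂ (b i) (w 0)‖)
    (sq_nonneg ‖inner ℂ (b i) (w 1)‖)
  have e0 := mul_nonneg (sub_nonneg.mpr (hl (show (0 : Fin 4) ≤ 1 by decide)))
    (sub_nonneg.mpr (sum_sq_norm_inner_le_one b hw 0))
  have e2 := mul_nonneg (sub_nonneg.mpr (hl (show (1 : Fin 4) ≤ 2 by decide))) (hnonneg 2)
  have e3 := mul_nonneg (sub_nonneg.mpr (hl (show (1 : Fin 4) ≤ 3 by decide))) (hnonneg 3)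
  simp only [spectralForm, Fin.sum_univ_four]
  linear_combination e0 + e2 + e3 + l 1 * (hn0 + hn1)

/-- Ky Fan's lower bound for two of four eigenvalues. -/
lemma le_spectralForm_add (b : OrthonormalBasis (Fin 4) ℂ E) {l : Fin 4 → ℝ} (hl : Antitone l)
    {w : Fin 2 → E} (hw : Orthonormal ℂ w) :
    l 2 + l 3 ≤ spectralForm b l (w 0) + spectralForm b l (w 1) := by
  have hn0 := b.sum_sq_norm_inner_right (w 0)
  have hn1 := b.sum_sq_norm_inner_right (w 1)
  rw [hw.1 0, Fin.sum_univ_four] at hn0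
  rw [hw.1 1, Fin.sum_univ_four] at hn1
  have hnonneg (i : Fin 4) := add_nonneg (sq_nonneg ‖inner ℂ (b i) (w 0)‖)
    (sq_nonneg ‖inner ℂ (b i) (w 1)‖)
  have e3 := mul_nonneg (sub_nonneg.mpr (hl (show (2 : Fin 4) ≤ 3 by decide)))
    (sub_nonneg.mpr (sum_sq_norm_inner_le_one b hw 3))
  have e0 := mul_nonneg (sub_nonneg.mpr (hl (show (0 : Fin 4) ≤ 2 by decide))) (hnonneg 0)
  have e1 := mul_nonneg (sub_nonneg.mpr (hl (show (1 : Fin 4) ≤ 2 by decide))) (hnonneg 1)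
  simp only [spectralForm, Fin.sum_univ_four]
  linear_combination e0 + e1 + e3 - l 2 * (hn0 + hn1)

lemma exists_combination_orthogonal (c : E) (w : Fin 2 → E) :
    ∃ α β : ℂ, 0 < ‖α‖ ^ 2 + ‖β‖ ^ 2 ∧ inner ℂ c (α • w 0 + β • w 1) = 0 := by
  by_cases h : inner ℂ c (w 0) = 0
  · exact ⟨1, 0, by simp, by simp [h]⟩
  · refine ⟨-inner ℂ c (w 1), inner ℂ c (w 0), ?_, ?_⟩
    · have := norm_pos_iff.mpr h
      positivity
    · rw [inner_add_right, inner_smul_right, inner_smul_right]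
      ring

lemma Orthonormal.norm_sq_combination {w : Fin 2 → E} (hw : Orthonormal ℂ w) (α β : ℂ) :
    ‖α • w 0 + β • w 1‖ ^ 2 = ‖α‖ ^ 2 + ‖β‖ ^ 2 := by
  have h : inner ℂ (α • w 0) (β • w 1) = 0 := by
    rw [inner_smul_left, inner_smul_right, hw.2 (by decide)]
    simp
  have := norm_add_sq_eq_norm_sq_add_norm_sq_of_inner_eq_zero _ _ h
  rw [norm_smul, norm_smul, hw.1, hw.1] at this
  linear_combination this

/-- If the spectral forms of two orthonormal pairs differ by `2 diag(a, c)`, the eigenvalues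
satisfy the Weyl and Ky Fan inequalities. -/
lemma spectral_gap_of_pairs (b : OrthonormalBasis (Fin 4) ℂ E) {l : Fin 4 → ℝ} (hl : Antitone l)
    {w w' : Fin 2 → E} (hw : Orthonormal ℂ w) (hw' : Orthonormal ℂ w') {a c : ℝ} (hac : c ≤ a)
    (h : ∀ α β : ℂ, spectralForm b l (α • w 0 + β • w 1) -
      spectralForm b l (α • w' 0 + β • w' 1) = 2 * (‖α‖ ^ 2 * a + ‖β‖ ^ 2 * c)) :
    2 * c ≤ l 1 - l 3 ∧ 2 * c ≤ l 0 - l 2 ∧ 2 * (a + c) ≤ l 0 + l 1 - l 2 - l 3 := by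
  have hbound {α β : ℂ} {M m : ℝ} (hpos : 0 < ‖α‖ ^ 2 + ‖β‖ ^ 2)
      (hM : ∀ i, inner ℂ (b i) (α • w 0 + β • w 1) ≠ 0 → l i ≤ M)
      (hm : ∀ i, inner ℂ (b i) (α • w' 0 + β • w' 1) ≠ 0 → m ≤ l i) : 2 * c ≤ M - m := by
    have h1 := spectralForm_le b hM
    have h2 := le_spectralForm b hm
    rw [hw.norm_sq_combination] at h1
    rw [hw'.norm_sq_combination] at h2
    refine le_of_mul_le_mul_right ?_ hpos
    linear_combination h1 + h2 - h α β + 2 * ‖α‖ ^ 2 * hac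
  refine ⟨?_, ?_, ?_⟩
  · obtain ⟨α, β, hpos, hz⟩ := exists_combination_orthogonal (b 0) w
    refine hbound hpos (fun i hi => hl ?_) fun i _ => hl (Fin.le_last i)
    exact Fin.one_le_of_ne_zero fun h0 => hi (h0 ▸ hz)
  · obtain ⟨α, β, hpos, hz⟩ := exists_combination_orthogonal (b 3) w'
    refine hbound hpos (fun i _ => hl (Fin.zero_le i)) fun i hi => hl ?_
    have : i ≠ 3 := fun h3 => hi (h3 ▸ hz)
    omega
  · have h1 := spectralForm_add_le b hl hw
    have h2 := le_spectralForm_add b hl hw'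
    have h3 := h 1 0
    have h4 := h 0 1
    simp only [one_smul, zero_smul, add_zero, zero_add, norm_one, norm_zero] at h3 h4
    linarith

end Spectral

/-- An orthonormal basis of eigenvectors for the eigenvalues listed by `eigVec`. -/
noncomputable def eigBasis {k : ℕ} (X : Matrix (Fin k) (Fin k) ℂ) (hX : X.IsHermitian) :
    OrthonormalBasis (Fin k) ℂ (EuclideanSpace ℂ (Fin k)) :=
  hX.eigenvectorBasis.reindex (Fin.revPerm.trans (Tuple.sort hX.eigenvalues)).symm

lemma toEuclideanLin_eigBasis {k : ℕ} (X : Matrix (Fin k) (Fin k) ℂ) (hX : X.IsHermitian)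
    (i : Fin k) : X.toEuclideanLin (eigBasis X hX i) = (eigVec X hX i : ℂ) • eigBasis X hX i := by
  have h := hX.mulVec_eigenvectorBasis (Tuple.sort hX.eigenvalues i.rev)
  have h' := congrArg (WithLp.toLp 2) h
  simpa [eigBasis, eigVec, toLpLin_apply] using h'

lemma re_inner_toEuclideanLin {k : ℕ} (X : Matrix (Fin k) (Fin k) ℂ) (hX : X.IsHermitian)
    (x : EuclideanSpace ℂ (Fin k)) :
    (inner ℂ x (X.toEuclideanLin x)).re = spectralForm (eigBasis X hX) (eigVec X hX) x := by
  have hsymm := isSymmetric_toEuclideanLin_iff.mpr hX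
  rw [← (eigBasis X hX).sum_inner_mul_inner, Complex.re_sum, spectralForm]
  refine Finset.sum_congr rfl fun i _ => ?_
  rw [← hsymm, toEuclideanLin_eigBasis, inner_smul_left, Complex.conj_ofReal, mul_left_comm,
    Complex.re_ofReal_mul, ← inner_conj_symm, Complex.conj_mul', ← Complex.ofReal_pow,
    Complex.ofReal_re]

/-- The vector `(u, v) / √2`, of norm one when `u` and `v` have norm one. -/
noncomputable def halfAppend {p q : ℕ} (u : EuclideanSpace ℂ (Fin p))
    (v : EuclideanSpace ℂ (Fin q)) : EuclideanSpace ℂ (Fin (p + q)) :=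
  WithLp.toLp 2 (((√2)⁻¹ : ℂ) • Fin.append u v)

lemma halfAppend_combination {p q : ℕ} (α β : ℂ) (u u' : EuclideanSpace ℂ (Fin p))
    (v v' : EuclideanSpace ℂ (Fin q)) :
    α • halfAppend u v + β • halfAppend u' v' =
      halfAppend (α • u + β • u') (α • v + β • v') := by
  ext i
  refine Fin.addCases (fun i => ?_) (fun i => ?_) i <;> simp [halfAppend] <;> ring

lemma inner_halfAppend {p q : ℕ} (u u' : EuclideanSpace ℂ (Fin p))
    (v v' : EuclideanSpace ℂ (Fin q)) :
    inner ℂ (halfAppend u v) (halfAppend u' v') = (inner ℂ u u' + inner ℂ v v') / 2 := by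
  have h2 : ((√2 : ℂ)⁻¹) * (√2 : ℂ)⁻¹ = 1 / 2 := by
    rw [← mul_inv, ← Complex.ofReal_mul, Real.mul_self_sqrt (by norm_num)]
    norm_num
  have h : halfAppend u v = ((√2)⁻¹ : ℂ) • WithLp.toLp 2 (Fin.append u v) := rfl
  have h' : halfAppend u' v' = ((√2)⁻¹ : ℂ) • WithLp.toLp 2 (Fin.append u' v') := rfl
  rw [h, h', inner_smul_left, inner_smul_right, ← mul_assoc, map_inv₀, Complex.conj_ofReal, h2]
  simp [PiLp.inner_apply, Fin.sum_univ_add]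
  ring

lemma toEuclideanLin_halfAppend {p q : ℕ} (X : Matrix (Fin (p + q)) (Fin (p + q)) ℂ)
    (u : EuclideanSpace ℂ (Fin p)) (v : EuclideanSpace ℂ (Fin q)) :
    X.toEuclideanLin (halfAppend u v) =
      halfAppend ((blockTL p q X).toEuclideanLin u + (blockTR p q X).toEuclideanLin v)
        ((blockBL p q X).toEuclideanLin u + (blockBR p q X).toEuclideanLin v) := by
  ext i
  refine Fin.addCases (fun i => ?_) (fun i => ?_) i <;>
  simp [halfAppend, toLpLin_apply, mulVec, dotProduct, Fin.sum_univ_add, blockTL, blockTR,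
    blockBL, blockBR, Finset.mul_sum, mul_add, mul_left_comm]

lemma spectralForm_halfAppend_sub {p q : ℕ} (X : Matrix (Fin (p + q)) (Fin (p + q)) ℂ)
    (hX : X.IsHermitian) (u : EuclideanSpace ℂ (Fin p)) (v : EuclideanSpace ℂ (Fin q)) :
    spectralForm (eigBasis X hX) (eigVec X hX) (halfAppend u v) -
      spectralForm (eigBasis X hX) (eigVec X hX) (halfAppend u (-v)) =
      2 * (inner ℂ u ((blockTR p q X).toEuclideanLin v)).re := by
  have hBL : blockBL p q X = (blockTR p q X)ᴴ := by
    ext i j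
    exact (hX.apply _ _).symm
  have hadj : (inner ℂ v ((blockBL p q X).toEuclideanLin u)).re =
      (inner ℂ u ((blockTR p q X).toEuclideanLin v)).re := by
    rw [hBL, toEuclideanLin_conjTranspose_eq_adjoint, LinearMap.adjoint_inner_right]
    exact inner_re_symm (𝕜 := ℂ) _ _
  rw [← re_inner_toEuclideanLin, ← re_inner_toEuclideanLin, toEuclideanLin_halfAppend,
    toEuclideanLin_halfAppend, inner_halfAppend, inner_halfAppend, ← Complex.sub_re]
  simp only [map_neg, inner_add_right, inner_neg_left, inner_neg_right]
  ring_nf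
  simp only [Complex.add_re]
  rw [hadj]
  ring

lemma orthonormal_halfAppend {ι : Type*} {p q : ℕ} {u : ι → EuclideanSpace ℂ (Fin p)}
    {v : ι → EuclideanSpace ℂ (Fin q)} (hu : Orthonormal ℂ u) (hv : Orthonormal ℂ v) :
    Orthonormal ℂ fun i => halfAppend (u i) (v i) := by
  classical
  rw [orthonormal_iff_ite] at hu hv ⊢
  intro i j
  rw [inner_halfAppend, hu, hv]
  split_ifs <;> norm_num

/-- Right singular vectors for the nonzero singular values. -/
noncomputable def rightSingular {a b : ℕ} (Y : Matrix (Fin a) (Fin b) ℂ) (i : Fin a) :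
    EuclideanSpace ℂ (Fin b) :=
  ((sval Y i)⁻¹ : ℂ) •
    Yᴴ.toEuclideanLin (eigBasis (Y * Yᴴ) (isHermitian_mul_conjTranspose_self Y) i)

open scoped ComplexOrder in
lemma sval_sq {a b : ℕ} (Y : Matrix (Fin a) (Fin b) ℂ) (i : Fin a) :
    sval Y i ^ 2 = eigVec (Y * Yᴴ) (isHermitian_mul_conjTranspose_self Y) i := by
  rw [sval, dif_pos i.isLt, Real.sq_sqrt]
  exact (posSemidef_self_mul_conjTranspose Y).eigenvalues_nonneg _

lemma toEuclideanLin_rightSingular {a b : ℕ} (Y : Matrix (Fin a) (Fin b) ℂ) {i : Fin a}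
    (hi : sval Y i ≠ 0) :
    Y.toEuclideanLin (rightSingular Y i) =
      (sval Y i : ℂ) • eigBasis (Y * Yᴴ) (isHermitian_mul_conjTranspose_self Y) i := by
  have hi' : (sval Y i : ℂ) ≠ 0 := mod_cast hi
  have h := toEuclideanLin_eigBasis _ (isHermitian_mul_conjTranspose_self Y) i
  rw [← sval_sq, toEuclideanLin, toLpLin_mul_same, LinearMap.comp_apply] at h
  rw [rightSingular, map_smul, h, smul_smul, Complex.ofReal_pow]
  congr 1
  field_simp

lemma inner_rightSingular {a b : ℕ} (Y : Matrix (Fin a) (Fin b) ℂ) {i j : Fin a}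
    (hi : sval Y i ≠ 0) (hj : sval Y j ≠ 0) :
    inner ℂ (rightSingular Y i) (rightSingular Y j) = if i = j then 1 else 0 := by
  have hi' : (sval Y i : ℂ) ≠ 0 := mod_cast hi
  conv_lhs => arg 2; rw [rightSingular]
  rw [inner_smul_left, toEuclideanLin_conjTranspose_eq_adjoint, LinearMap.adjoint_inner_left,
    toEuclideanLin_rightSingular Y hj, inner_smul_right,
    orthonormal_iff_ite.mp (eigBasis (Y * Yᴴ) _).orthonormal]
  split_ifs with h
  · subst h
    simp [hi']
  · simp

lemma two_mul_sval_le {p q : ℕ} (X : Matrix (Fin (p + q)) (Fin (p + q)) ℂ) (hX : X.IsHermitian)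
    {i : Fin p} (hi : sval (blockTR p q X) i ≠ 0) {M m : ℝ} (hM : ∀ j, eigVec X hX j ≤ M)
    (hm : ∀ j, m ≤ eigVec X hX j) : 2 * sval (blockTR p q X) i ≤ M - m := by
  obtain ⟨u, hu⟩ : ∃ u, u = eigBasis _ (isHermitian_mul_conjTranspose_self (blockTR p q X)) i :=
    ⟨_, rfl⟩
  have huu : inner ℂ u u = 1 := by
    rw [hu, orthonormal_iff_ite.mp (eigBasis _ _).orthonormal, if_pos rfl]
  have hvv := inner_rightSingular _ hi hi
  rw [if_pos rfl] at hvv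
  have hgap := spectralForm_halfAppend_sub X hX u (rightSingular (blockTR p q X) i)
  rw [toEuclideanLin_rightSingular _ hi, ← hu, inner_smul_right, huu, mul_one,
    Complex.ofReal_re] at hgap
  have hnorm (v : EuclideanSpace ℂ (Fin q)) (hv : inner ℂ v v = 1) : ‖halfAppend u v‖ ^ 2 = 1 := by
    rw [← inner_self_eq_norm_sq (𝕜 := ℂ), inner_halfAppend, huu, hv]
    norm_num
  have h1 := spectralForm_le (eigBasis X hX) (x := halfAppend u (rightSingular (blockTR p q X) i))
    fun j _ => hM j
  have h2 := le_spectralForm (eigBasis X hX) (x := halfAppend u (-rightSingular (blockTR p q X) i))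
    fun j _ => hm j
  rw [hnorm _ hvv] at h1
  rw [hnorm _ (by rw [inner_neg_neg, hvv])] at h2
  linarith

lemma inequalities_of_sval_ne_zero (X : Matrix (Fin (2 + 2)) (Fin (2 + 2)) ℂ) (hX : X.IsHermitian)
    {s : Fin 2 → ℝ} (hs : ∀ i : Fin 2, s i = sval (blockTR 2 2 X) i) (hne : ∀ i, s i ≠ 0)
    (hle : s 1 ≤ s 0) :
    2 * s 1 ≤ eigVec X hX 1 - eigVec X hX 3 ∧ 2 * s 1 ≤ eigVec X hX 0 - eigVec X hX 2 ∧
      2 * (s 0 + s 1) ≤ eigVec X hX 0 + eigVec X hX 1 - eigVec X hX 2 - eigVec X hX 3 := by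
  obtain ⟨u, hu⟩ : ∃ u, u = eigBasis _ (isHermitian_mul_conjTranspose_self (blockTR 2 2 X)) :=
    ⟨_, rfl⟩
  have hne' (i : Fin 2) : sval (blockTR 2 2 X) i ≠ 0 := hs i ▸ hne i
  obtain ⟨v, hv⟩ : ∃ v, v = rightSingular (blockTR 2 2 X) := ⟨_, rfl⟩
  have hvo : Orthonormal ℂ v := orthonormal_iff_ite.mpr fun i j => by
    rw [hv, inner_rightSingular _ (hne' i) (hne' j)]
  have hvo' : Orthonormal ℂ fun i => -v i := by
    simpa [orthonormal_iff_ite] using orthonormal_iff_ite.mp hvo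
  have hYv (i : Fin 2) : (blockTR 2 2 X).toEuclideanLin (v i) = (s i : ℂ) • u i := by
    rw [hv, toEuclideanLin_rightSingular _ (hne' i), hs, hu]
  refine spectral_gap_of_pairs (eigBasis X hX) (eigVec_antitone X hX)
    (orthonormal_halfAppend u.orthonormal hvo) (orthonormal_halfAppend u.orthonormal hvo') hle
    fun α β => ?_
  rw [halfAppend_combination, halfAppend_combination, smul_neg, smul_neg, ← neg_add,
    spectralForm_halfAppend_sub, map_add, map_smul, map_smul, hYv, hYv]
  congr 1
  have huu := orthonormal_iff_ite.mp u.orthonormal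
  simp only [inner_add_left, inner_add_right, inner_smul_left, inner_smul_right, huu]
  have hα := Complex.conj_mul' α
  have hβ := Complex.conj_mul' β
  have : ∀ z : ℂ, z = ((‖α‖ ^ 2 * s 0 + ‖β‖ ^ 2 * s 1 : ℝ) : ℂ) →
      z.re = ‖α‖ ^ 2 * s 0 + ‖β‖ ^ 2 * s 1 := by
    rintro z rfl
    exact Complex.ofReal_re _
  apply this
  push_cast
  simp only [← hα, ← hβ]
  simp
  ring

lemma inequalities_of_mem_coneA {lam : Fin (2 + 2) → ℝ} {s : Fin 2 → ℝ}
    (hs1 : s 0 ≥ s 1) (hs2 : s 1 ≥ 0) (h : (lam, s) ∈ coneA 2 2) :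
    lam 0 - lam 3 ≥ 2 * s 0 ∧ lam 1 - lam 3 ≥ 2 * s 1 ∧ lam 0 - lam 2 ≥ 2 * s 1 ∧
      lam 0 + lam 1 - lam 2 - lam 3 ≥ 2 * (s 0 + s 1) := by
  obtain ⟨X, hX, rfl, hs : ∀ i : Fin 2, s i = sval (blockTR 2 2 X) i⟩ := h
  have hanti := eigVec_antitone X hX
  have h01 : eigVec X hX 1 ≤ eigVec X hX 0 := hanti (by decide)
  have h12 : eigVec X hX 2 ≤ eigVec X hX 1 := hanti (by decide)
  have h23 : eigVec X hX 3 ≤ eigVec X hX 2 := hanti (by decide)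
  have hfst : 2 * s 0 ≤ eigVec X hX 0 - eigVec X hX 3 := by
    by_cases h0 : s 0 = 0
    · linarith
    · rw [hs] at h0 ⊢
      exact two_mul_sval_le X hX h0 (fun j => hanti (Fin.zero_le j)) fun j => hanti (Fin.le_last j)
  by_cases h1 : s 1 = 0
  · refine ⟨hfst, ?_, ?_, ?_⟩ <;> linarith
  · refine ⟨hfst, inequalities_of_sval_ne_zero X hX hs (fun i => ?_) hs1⟩
    have : 0 < s 1 := lt_of_le_of_ne hs2 (Ne.symm h1)
    fin_cases i
    exacts [(this.trans_le hs1).ne', h1]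

theorem stmt_4 (lam : Fin (2 + 2) → ℝ) (s : Fin 2 → ℝ)
    (h1 : lam 0 ≥ lam 1) (h2 : lam 1 ≥ lam 2) (h3 : lam 2 ≥ lam 3)
    (hs1 : s 0 ≥ s 1) (hs2 : s 1 ≥ 0) :
    (lam, s) ∈ coneA 2 2 ↔
      (lam 0 - lam 3 ≥ 2 * s 0 ∧
       lam 1 - lam 3 ≥ 2 * s 1 ∧
       lam 0 - lam 2 ≥ 2 * s 1 ∧
       lam 0 + lam 1 - lam 2 - lam 3 ≥ 2 * (s 0 + s 1)) :=
  ⟨inequalities_of_mem_coneA hs1 hs2, fun ⟨hA, hB, hC, hD⟩ =>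
    mem_coneA_of_inequalities h1 h2 h3 hs1 hs2 hA hB hC hD⟩
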